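/- arXiv:1406.1942 — 4 statements merged into one kernel-verified Lean document; each statement's English description precedes it below -/
import Mathlib

section
/- Let G be a finite connected simple graph on [d] and let e and f be distinct edges of G. Then the segment co(e,f) = conv{ρ(e), ρ(f)} is a face (extreme subset) of the edge polytope 𝒫_G — that is, an edge of 𝒫_G — if and only if e and f are not cycle-compatible. -/
/-- For an edge `e = {i,j}` of a graph on `[d]`, `rho e = 𝐞ᵢ + 𝐞ⱼ ∈ ℝ^d`. -/
noncomputable def rho {d : ℕ} (e : Sym2 (Fin d)) : Fin d → ℝ :=
  Sym2.lift ⟨fun i j => Pi.single i 1 + Pi.single j 1, fun _ _ => add_comm _ _⟩ e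

/-- The edge polytope of a graph `G` on `[d]`: the convex hull of `{ρ(e) : e ∈ E(G)}`. -/
noncomputable def edgePolytope {d : ℕ} (G : SimpleGraph (Fin d)) : Set (Fin d → ℝ) :=
  convexHull ℝ (rho '' G.edgeSet)

/-- A set is integral if all its extreme points have integer coordinates. -/
def IsIntegralSet {d : ℕ} (Q : Set (Fin d → ℝ)) : Prop :=
  ∀ x ∈ Q.extremePoints ℝ, ∀ i, ∃ n : ℤ, x i = (n : ℝ)

/-- The hyperplane `{x : ∑ aᵢxᵢ = c}` is a separating hyperplane of `𝒫_G`: it meets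
`𝒫_G \ ∂𝒫_G` (the intrinsic interior), and both closed half-space slices are integral. -/
def IsSepHyperplane {d : ℕ} (G : SimpleGraph (Fin d)) (a : Fin d → ℝ) (c : ℝ) : Prop :=
  a ≠ 0 ∧
  (∃ x ∈ intrinsicInterior ℝ (edgePolytope G), ∑ i, a i * x i = c) ∧
  IsIntegralSet (edgePolytope G ∩ {x | c ≤ ∑ i, a i * x i}) ∧
  IsIntegralSet (edgePolytope G ∩ {x | ∑ i, a i * x i ≤ c})

/-- `𝒫_G` is decomposable if it has a separating hyperplane. -/
def Decomposable {d : ℕ} (G : SimpleGraph (Fin d)) : Prop :=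
  ∃ a c, IsSepHyperplane G a c

/-- Edges `e = {i,j}` and `f = {k,l}` are cycle-compatible: the subgraph of `G` induced by
`{i,j,k,l}` contains a 4-cycle. -/
def CycleCompatible {V : Type*} (G : SimpleGraph V) (e f : Sym2 V) : Prop :=
  ∃ i j k l : V, e = s(i, j) ∧ f = s(k, l) ∧
    ∃ a b c d' : V, ({a, b, c, d'} : Set V) ⊆ {i, j, k, l} ∧
      a ≠ b ∧ a ≠ c ∧ a ≠ d' ∧ b ≠ c ∧ b ≠ d' ∧ c ≠ d' ∧
      G.Adj a b ∧ G.Adj b c ∧ G.Adj c d' ∧ G.Adj d' a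

/-!
An edge polytope is cut by vertex weights: a weight `w` with `w a + w b ≤ c` on every edge `ab`
exhibits the convex hull of the edges attaining `c` as a face. If `e` and `f` share a vertex, or if
some vertex of one has no neighbour on the other, such a weight attaining `c` exactly at `e` and `f`
is easily written down, and disjoint edges escaping both cases are opposite in a 4-cycle.
Conversely, the two perfect matchings of a 4-cycle on the vertices of `e` and `f` both have sum
`ρ(e) + ρ(f)`, and one of their edges lies off `{e, f}`, so `co(e,f)` is not extreme.
-/

section Convex

variable {𝕜 E : Type*} [LinearOrder 𝕜] {φ : E → 𝕜} {c : 𝕜} {S : Set E}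

section Hyperplane

variable [Semiring 𝕜] [IsStrictOrderedRing 𝕜] [AddCommMonoid E] [Module 𝕜 E]

theorem isExtreme_halfSpace_hyperplane (hφ : IsLinearMap 𝕜 φ) (c : 𝕜) :
    IsExtreme 𝕜 {x | φ x ≤ c} {x | φ x = c} := by
  refine ⟨fun x hx => le_of_eq hx, ?_⟩
  rintro x (hx : φ x ≤ c) y (hy : φ y ≤ c) _ hz ⟨a, b, ha, hb, hab, rfl⟩
  by_contra hne
  have hlt : φ x < c := lt_of_le_of_ne hx hne
  refine absurd hz (ne_of_lt ?_)
  calc φ (a • x + b • y) = a * φ x + b * φ y := by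
        rw [hφ.map_add, hφ.map_smul, hφ.map_smul, smul_eq_mul, smul_eq_mul]
    _ < a * c + b * c := add_lt_add_of_lt_of_le (by gcongr) (by gcongr)
    _ = c := by rw [← add_mul, hab, one_mul]

theorem convexHull_inter_hyperplane (hφ : IsLinearMap 𝕜 φ) (hS : ∀ x ∈ S, φ x ≤ c) :
    convexHull 𝕜 S ∩ {x | φ x = c} = convexHull 𝕜 (S ∩ {x | φ x = c}) := by
  have hface := isExtreme_halfSpace_hyperplane hφ c
  have hconvex : Convex 𝕜 {x | φ x ≤ c ∧ (φ x = c → x ∈ convexHull 𝕜 (S ∩ {x | φ x = c}))} := by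
    rw [convex_iff_openSegment_subset]
    rintro x ⟨hxc, hx⟩ y ⟨hyc, hy⟩ z hz
    refine ⟨(convex_halfSpace_le hφ c).openSegment_subset hxc hyc hz, fun hzc => ?_⟩
    exact (convex_convexHull 𝕜 _).openSegment_subset
      (hx <| hface.left_mem_of_mem_openSegment hxc hyc hzc hz)
      (hy <| hface.right_mem_of_mem_openSegment hxc hyc hzc hz) hz
  refine Set.Subset.antisymm ?_ (Set.subset_inter (convexHull_mono Set.inter_subset_left) ?_)
  · rintro x ⟨hx, hxc⟩
    refine (convexHull_min (fun y hy => ?_) hconvex hx).2 hxc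
    exact ⟨hS y hy, fun hyc => subset_convexHull 𝕜 _ ⟨hy, hyc⟩⟩
  · exact convexHull_min Set.inter_subset_right (convex_hyperplane hφ c)

theorem isExtreme_convexHull_inter_hyperplane (hφ : IsLinearMap 𝕜 φ) (hS : ∀ x ∈ S, φ x ≤ c) :
    IsExtreme 𝕜 (convexHull 𝕜 S) (convexHull 𝕜 (S ∩ {x | φ x = c})) := by
  have hle : convexHull 𝕜 S ⊆ {x | φ x ≤ c} := convexHull_min hS (convex_halfSpace_le hφ c)
  rw [← convexHull_inter_hyperplane hφ hS]
  exact ⟨Set.inter_subset_left, fun x hx y hy z hz hxyz => ⟨hx,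
    (isExtreme_halfSpace_hyperplane hφ c).left_mem_of_mem_openSegment (hle hx) (hle hy) hz.2 hxyz⟩⟩

end Hyperplane

theorem mem_of_isExtreme_of_add_eq_add [Ring 𝕜] [IsStrictOrderedRing 𝕜] [Invertible (2 : 𝕜)]
    [AddCommGroup E] [Module 𝕜 E] {A B : Set E} (hAB : IsExtreme 𝕜 A B) (hB : Convex 𝕜 B)
    {x y u v : E} (hx : x ∈ A) (hy : y ∈ A) (hu : u ∈ B) (hv : v ∈ B) (h : x + y = u + v) :
    x ∈ B := by
  have hmid : midpoint 𝕜 x y = midpoint 𝕜 u v := by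
    rw [midpoint_eq_smul_add, midpoint_eq_smul_add, h]
  exact hAB.left_mem_of_mem_openSegment hx hy (hB.midpoint_mem hu hv)
    (hmid ▸ midpoint_mem_openSegment x y)

end Convex

section Rho

variable {d : ℕ}

theorem rho_mk (i j : Fin d) : rho s(i, j) = Pi.single i 1 + Pi.single j 1 := rfl

theorem rho_eq_sum_toMultiset (e : Sym2 (Fin d)) :
    rho e = (e.toMultiset.map fun v => (Pi.single v 1 : Fin d → ℝ)).sum := by
  induction e with | _ i j
  simp [rho_mk, Sym2.toMultiset]

theorem dotProduct_rho_mk (w : Fin d → ℝ) (i j : Fin d) : w ⬝ᵥ rho s(i, j) = w i + w j := by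
  rw [rho_mk, dotProduct_add, dotProduct_single_one, dotProduct_single_one]

theorem mem_of_rho_mem_convexHull {F : Set (Sym2 (Fin d))} (hF : ∀ g ∈ F, ¬ g.IsDiag)
    {e : Sym2 (Fin d)} (he : rho e ∈ convexHull ℝ (rho '' F)) : e ∈ F := by
  by_contra heF
  let w : Fin d → ℝ := fun v => if v ∈ e then 1 else 0
  have hsub : convexHull ℝ (rho '' F) ⊆ {x | w ⬝ᵥ x < 2} := by
    refine convexHull_min ?_ (convex_halfSpace_lt (dotProductBilin ℝ ℝ w).isLinear 2)
    rintro _ ⟨g, hg, rfl⟩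
    have hge : g ≠ e := fun h => heF (h ▸ hg)
    induction g with | _ a b
    have hab : a ≠ b := hF _ hg
    have hnot_both : ¬ (a ∈ e ∧ b ∈ e) := fun h => hge ((Sym2.mem_and_mem_iff hab).1 h).symm
    rw [Set.mem_ofPred_eq, dotProduct_rho_mk]
    grind
  have hlt : w ⬝ᵥ rho e < 2 := hsub he
  induction e with | _ i j
  rw [dotProduct_rho_mk] at hlt
  grind

end Rho

section CycleCompatible

variable {V : Type*} {G : SimpleGraph V} {e f : Sym2 V}

theorem cycleCompatible_of_adj {i j k l : V} (hij : G.Adj i j) (hjk : G.Adj j k) (hkl : G.Adj k l)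
    (hli : G.Adj l i) (hik : i ≠ k) (hjl : j ≠ l) : CycleCompatible G s(i, j) s(k, l) :=
  ⟨i, j, k, l, rfl, rfl, i, j, k, l, subset_rfl, hij.ne, hik, hli.ne', hjk.ne, hjl, hkl.ne,
    hij, hjk, hkl, hli⟩

theorem exists_forall_not_adj_of_not_cycleCompatible (he : e ∈ G.edgeSet) (hf : f ∈ G.edgeSet)
    (hdisj : ∀ v ∈ e, v ∉ f) (h : ¬ CycleCompatible G e f) :
    (∃ i ∈ e, ∀ v ∈ f, ¬ G.Adj i v) ∨ ∃ k ∈ f, ∀ v ∈ e, ¬ G.Adj k v := by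
  induction e with | _ i j
  induction f with | _ k l
  rw [SimpleGraph.mem_edgeSet] at he hf
  simp only [Sym2.mem_iff, forall_eq_or_imp, forall_eq, not_or] at hdisj
  obtain ⟨⟨hik, hil⟩, hjk, hjl⟩ := hdisj
  have hjk_li : ¬ (G.Adj j k ∧ G.Adj l i) := fun ⟨h₁, h₂⟩ =>
    h (cycleCompatible_of_adj he h₁ hf h₂ hik hjl)
  have hjl_ki : ¬ (G.Adj j l ∧ G.Adj k i) := fun ⟨h₁, h₂⟩ =>
    h (Sym2.eq_swap (a := l) ▸ cycleCompatible_of_adj he h₁ hf.symm h₂ hil hjk)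
  by_contra! hadj
  simp only [Sym2.mem_iff, exists_eq_or_imp, exists_eq_left] at hadj
  grind [SimpleGraph.adj_comm]

theorem CycleCompatible.exists_fourCycle (h : CycleCompatible G e f) :
    ∃ a b c d, G.Adj a b ∧ G.Adj b c ∧ G.Adj c d ∧ G.Adj d a ∧
      ({a, b, c, d} : Multiset V).Nodup ∧ e.toMultiset + f.toMultiset = {a, b, c, d} := by
  obtain ⟨i, j, k, l, rfl, rfl, a, b, c, d, hsub, hab, hac, had, hbc, hbd, hcd,
    h₁, h₂, h₃, h₄⟩ := h
  have hnodup : ({a, b, c, d} : Multiset V).Nodup := by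
    simp [*]
  refine ⟨a, b, c, d, h₁, h₂, h₃, h₄, hnodup, ?_⟩
  have hle : ({a, b, c, d} : Multiset V) ≤ {i, j, k, l} := by
    rw [Multiset.le_iff_subset hnodup]
    intro v hv
    simpa using hsub (by simpa using hv)
  exact (Multiset.eq_of_le_of_card_le hle (by simp)).symm

end CycleCompatible

section EdgePolytope

variable {d : ℕ} {G : SimpleGraph (Fin d)} {e f : Sym2 (Fin d)}

theorem CycleCompatible.exists_rho_add_rho_eq (h : CycleCompatible G e f) :
    ∃ g ∈ G.edgeSet, ∃ g' ∈ G.edgeSet, g ∉ ({e, f} : Set (Sym2 (Fin d))) ∧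
      rho g + rho g' = rho e + rho f := by
  obtain ⟨v₁, v₂, v₃, v₄, h₁₂, h₂₃, h₃₄, h₄₁, hnodup, hsum⟩ := h.exists_fourCycle
  have hrho : rho e + rho f =
      Pi.single v₁ 1 + (Pi.single v₂ 1 + (Pi.single v₃ 1 + Pi.single v₄ 1)) := by
    rw [rho_eq_sum_toMultiset, rho_eq_sum_toMultiset, ← Multiset.sum_add, ← Multiset.map_add, hsum]
    simp
  have hdisj : ∀ v ∈ e, v ∉ f := fun v hve hvf =>
    Multiset.disjoint_left.1 (Multiset.nodup_add.1 (hsum ▸ hnodup)).2.2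
      (Sym2.mem_toMultiset.2 hve) (Sym2.mem_toMultiset.2 hvf)
  by_cases hmem : s(v₁, v₂) ∈ ({e, f} : Set (Sym2 (Fin d)))
  · have hv₁₃ : v₁ ≠ v₃ := by
      rintro rfl
      simp at hnodup
    have hne : s(v₁, v₂) ≠ s(v₂, v₃) := by grind
    have hnotMem : s(v₂, v₃) ∉ ({e, f} : Set (Sym2 (Fin d))) := by
      have hv₂ := Sym2.mem_mk_right v₁ v₂
      have hv₂' := Sym2.mem_mk_left v₂ v₃
      grind
    exact ⟨s(v₂, v₃), h₂₃, s(v₄, v₁), h₄₁, hnotMem, by rw [hrho, rho_mk, rho_mk]; abel⟩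
  · exact ⟨s(v₁, v₂), h₁₂, s(v₃, v₄), h₃₄, hmem, by rw [hrho, rho_mk, rho_mk]; abel⟩

theorem CycleCompatible.not_isExtreme (h : CycleCompatible G e f) (he : e ∈ G.edgeSet)
    (hf : f ∈ G.edgeSet) : ¬ IsExtreme ℝ (edgePolytope G) (convexHull ℝ {rho e, rho f}) := by
  intro hface
  obtain ⟨g, hg, g', hg', hne, hsum⟩ := h.exists_rho_add_rho_eq
  have hmem : rho g ∈ convexHull ℝ {rho e, rho f} :=
    mem_of_isExtreme_of_add_eq_add hface (convex_convexHull ℝ _)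
      (subset_convexHull ℝ _ ⟨g, hg, rfl⟩) (subset_convexHull ℝ _ ⟨g', hg', rfl⟩)
      (subset_convexHull ℝ _ (.inl rfl)) (subset_convexHull ℝ _ (.inr rfl)) hsum
  rw [← Set.image_pair] at hmem
  refine hne (mem_of_rho_mem_convexHull ?_ hmem)
  rintro _ (rfl | rfl)
  exacts [G.not_isDiag_of_mem_edgeSet he, G.not_isDiag_of_mem_edgeSet hf]

theorem isExtreme_edgePolytope_of_weight {F : Set (Sym2 (Fin d))} (hF : F ⊆ G.edgeSet)
    (w : Fin d → ℝ) (c : ℝ) (heq : ∀ a b, s(a, b) ∈ F → w a + w b = c)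
    (hlt : ∀ a b, G.Adj a b → s(a, b) ∉ F → w a + w b < c) :
    IsExtreme ℝ (edgePolytope G) (convexHull ℝ (rho '' F)) := by
  have hle : ∀ x ∈ rho '' G.edgeSet, w ⬝ᵥ x ≤ c := by
    rintro _ ⟨⟨a, b⟩, hab, rfl⟩
    rw [dotProduct_rho_mk]
    by_cases habF : s(a, b) ∈ F
    exacts [(heq a b habF).le, (hlt a b hab habF).le]
  have hmax : F = G.edgeSet ∩ rho ⁻¹' {x | w ⬝ᵥ x = c} := by
    ext ⟨a, b⟩
    have hval : s(a, b) ∈ rho ⁻¹' {x | w ⬝ᵥ x = c} ↔ w a + w b = c := by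
      rw [← dotProduct_rho_mk]; rfl
    rw [Set.mem_inter_iff, hval]
    exact ⟨fun h => ⟨hF h, heq a b h⟩, fun ⟨hab, hc⟩ => by_contra fun h => (hlt a b hab h).ne hc⟩
  rw [hmax, Set.image_inter_preimage]
  exact isExtreme_convexHull_inter_hyperplane (dotProductBilin ℝ ℝ w).isLinear hle

theorem isExtreme_edgePolytope_of_mem_of_mem (he : e ∈ G.edgeSet) (hf : f ∈ G.edgeSet) {i : Fin d}
    (hie : i ∈ e) (hif : i ∈ f) :
    IsExtreme ℝ (edgePolytope G) (convexHull ℝ {rho e, rho f}) := by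
  obtain ⟨j, rfl⟩ := Sym2.mem_iff_exists.1 hie
  obtain ⟨l, rfl⟩ := Sym2.mem_iff_exists.1 hif
  rw [← Set.image_pair]
  have hij : i ≠ j := G.ne_of_adj he
  have hil : i ≠ l := G.ne_of_adj hf
  refine isExtreme_edgePolytope_of_weight (Set.pair_subset he hf)
    (fun v => if v = i then 2 else if v = j ∨ v = l then 1 else 0) 3 ?_ ?_
  · grind [Sym2.eq_iff]
  · intro a b hab
    have hne := hab.ne
    grind [Sym2.eq_iff]

theorem isExtreme_edgePolytope_of_forall_not_adj (he : e ∈ G.edgeSet) (hf : f ∈ G.edgeSet)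
    {i : Fin d} (hi : i ∈ e) (hadj : ∀ v ∈ f, ¬ G.Adj i v) :
    IsExtreme ℝ (edgePolytope G) (convexHull ℝ {rho e, rho f}) := by
  obtain ⟨j, rfl⟩ := Sym2.mem_iff_exists.1 hi
  induction f with | _ k l
  simp only [Sym2.mem_iff, forall_eq_or_imp, forall_eq] at hadj
  have hij : G.Adj i j := he
  have hkl : G.Adj k l := hf
  have hdisj : i ≠ k ∧ i ≠ l ∧ j ≠ k ∧ j ≠ l := by grind [SimpleGraph.adj_comm]
  have hne_ij : i ≠ j := hij.ne
  rw [← Set.image_pair]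
  -- Only `i` has positive weight, and all its neighbours except `j` have weight `-2`.
  refine isExtreme_edgePolytope_of_weight (Set.pair_subset he hf)
    (fun v => if v = i then 1 else if v = j then -1 else if v = k ∨ v = l then 0 else -2) 0 ?_ ?_
  · grind [Sym2.eq_iff]
  · intro a b hab
    have hne := hab.ne
    have hba := hab.symm
    grind [Sym2.eq_iff]

theorem isExtreme_edgePolytope_of_not_cycleCompatible (he : e ∈ G.edgeSet) (hf : f ∈ G.edgeSet)
    (h : ¬ CycleCompatible G e f) :
    IsExtreme ℝ (edgePolytope G) (convexHull ℝ {rho e, rho f}) := by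
  by_cases! hdisj : ∃ v ∈ e, v ∈ f
  · obtain ⟨v, hve, hvf⟩ := hdisj
    exact isExtreme_edgePolytope_of_mem_of_mem he hf hve hvf
  rcases exists_forall_not_adj_of_not_cycleCompatible he hf hdisj h with
    ⟨i, hi, hadj⟩ | ⟨k, hk, hadj⟩
  · exact isExtreme_edgePolytope_of_forall_not_adj he hf hi hadj
  · rw [Set.pair_comm]
    exact isExtreme_edgePolytope_of_forall_not_adj hf he hk hadj

end EdgePolytope

theorem edge_of_edgePolytope_iff_not_cycleCompatible_general {d : ℕ} (G : SimpleGraph (Fin d))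
    (e f : Sym2 (Fin d)) (he : e ∈ G.edgeSet) (hf : f ∈ G.edgeSet) :
    IsExtreme ℝ (edgePolytope G) (convexHull ℝ {rho e, rho f}) ↔ ¬ CycleCompatible G e f :=
  ⟨fun hface h => h.not_isExtreme he hf hface, isExtreme_edgePolytope_of_not_cycleCompatible he hf⟩

/-- Let `G` be a finite connected simple graph on `[d]` and `e ≠ f` edges of
`G`. Then `co(e,f) = conv{ρ(e), ρ(f)}` is a face (extreme subset) of `𝒫_G`, i.e. an edge of
`𝒫_G`, if and only if `e` and `f` are not cycle-compatible. -/
theorem edge_of_edgePolytope_iff_not_cycleCompatible {d : ℕ} (G : SimpleGraph (Fin d))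
    (hG : G.Connected) (e f : Sym2 (Fin d)) (he : e ∈ G.edgeSet) (hf : f ∈ G.edgeSet)
    (hef : e ≠ f) :
    IsExtreme ℝ (edgePolytope G) (convexHull ℝ {rho e, rho f}) ↔
      ¬ CycleCompatible G e f :=
  edge_of_edgePolytope_iff_not_cycleCompatible_general G e f he hf
end

section
/- Let G be a finite simple graph on [d] with at least one edge. Then the dimension of the affine hull of the edge polytope 𝒫_G equals d − r − 1, where r is the number of connected components of G that are bipartite (isolated vertices counting as bipartite components). -/
/-- A graph is bipartite if its vertex set can be partitioned into two parts so that every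
edge joins the two parts. -/
def IsBipartite {V : Type*} (G : SimpleGraph V) : Prop :=
  ∃ s : Set V, ∀ ⦃i j⦄, G.Adj i j → (i ∈ s ↔ j ∉ s)

open Module Submodule Matrix

section VectorSpan

variable {K E : Type*} [Field K] [AddCommGroup E] [Module K E] {s : Set E}

theorem vectorSpan_eq_span_inf_ker (hs : s.Nonempty) (φ : Dual K E) {c : K} (hc : c ≠ 0)
    (hφ : ∀ x ∈ s, φ x = c) : vectorSpan K s = span K s ⊓ φ.ker := by
  obtain ⟨p, hp⟩ := hs
  apply le_antisymm
  · refine span_le.2 ?_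
    rintro _ ⟨x, hx, y, hy, rfl⟩
    exact ⟨sub_mem (subset_span hx) (subset_span hy), by simp [hφ x hx, hφ y hy]⟩
  · let π : E →ₗ[K] E := LinearMap.id - (c⁻¹ • φ).smulRight p
    have hπ : span K s ≤ (vectorSpan K s).comap π := by
      refine span_le.2 fun x hx => ?_
      have hπx : π x = x -ᵥ p := by simp [π, hφ x hx, hc]
      exact mem_comap.2 (hπx ▸ vsub_mem_vectorSpan K hx hp)
    rintro x ⟨hx, hφx⟩
    have hπx : π x = x := by simp [π, LinearMap.mem_ker.1 hφx]
    exact hπx ▸ hπ hx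

theorem finrank_vectorSpan_add_one_eq_finrank_span [FiniteDimensional K (span K s)]
    (hs : s.Nonempty) (φ : Dual K E) {c : K} (hc : c ≠ 0) (hφ : ∀ x ∈ s, φ x = c) :
    finrank K (vectorSpan K s) + 1 = finrank K (span K s) := by
  have hne : φ.domRestrict (span K s) ≠ 0 := by
    obtain ⟨p, hp⟩ := hs
    intro h0
    exact hc ((hφ p hp).symm.trans (LinearMap.congr_fun h0 ⟨p, subset_span hp⟩))
  rw [vectorSpan_eq_span_inf_ker hs φ hc hφ, ← map_comap_subtype, finrank_map_subtype_eq,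
    ← Dual.finrank_ker_add_one_of_ne_zero hne, LinearMap.ker_domRestrict]

end VectorSpan

section AlternatingWeights

variable {V : Type*}

/-- The bipartite connected components of a graph, an isolated vertex being one of them. -/
abbrev BipartiteComponent (G : SimpleGraph V) : Type _ :=
  {c : G.ConnectedComponent // IsBipartite (G.induce c.supp)}

theorem IsBipartite.exists_sign {G : SimpleGraph V} {s : Set V} (h : IsBipartite (G.induce s)) :
    ∃ τ : V → ℤˣ, ∀ ⦃i j⦄, i ∈ s → j ∈ s → G.Adj i j → τ i = -τ j := by
  classical
  obtain ⟨t, ht⟩ := h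
  refine ⟨fun v => if v ∈ Subtype.val '' t then 1 else -1, fun i j hi hj hij => ?_⟩
  have hiff : i ∈ Subtype.val '' t ↔ j ∉ Subtype.val '' t := by
    simpa [hi, hj] using @ht ⟨i, hi⟩ ⟨j, hj⟩ hij
  by_cases hjt : j ∈ Subtype.val '' t <;> simp only [hiff, hjt] <;> simp

/-- The weightings of the vertices for which the weights of the two ends of every edge add up to
zero, that is, the left kernel of the incidence matrix. -/
def alternatingWeights (R : Type*) [Ring R] (G : SimpleGraph V) : Submodule R (V → R) where
  carrier := {y | ∀ ⦃i j⦄, G.Adj i j → y i + y j = 0}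
  add_mem' {x y} hx hy i j hij := by
    simpa [hx hij, hy hij] using add_add_add_comm (x i) (y i) (x j) (y j)
  zero_mem' := by simp
  smul_mem' a y hy i j hij := by simp [← mul_add, hy hij]

variable {R : Type*} [Ring R] {G : SimpleGraph V} {y : V → R}

theorem mem_alternatingWeights :
    y ∈ alternatingWeights R G ↔ ∀ ⦃i j⦄, G.Adj i j → y i + y j = 0 :=
  Iff.rfl

theorem apply_eq_or_eq_neg_of_reachable (hy : y ∈ alternatingWeights R G) {u v : V}
    (h : G.Reachable u v) : y u = y v ∨ y u = -y v := by
  obtain ⟨w⟩ := h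
  induction w with
  | nil => exact .inl rfl
  | cons hadj _ ih =>
    rw [eq_neg_of_add_eq_zero_left (hy hadj), neg_inj, neg_eq_iff_eq_neg]
    exact ih.symm

theorem isBipartite_induce_supp_of_apply_ne_zero [NoZeroDivisors R] [NeZero (2 : R)]
    (hy : y ∈ alternatingWeights R G) {v : V} (hv : y v ≠ 0) :
    IsBipartite (G.induce (G.connectedComponentMk v).supp) := by
  have hne : -y v ≠ y v := by
    rw [Ne, neg_eq_iff_add_eq_zero, ← two_mul]
    exact mul_ne_zero two_ne_zero hv
  refine ⟨{w | y w = y v}, fun i j hij => ?_⟩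
  have hj : y j = -y i := eq_neg_of_add_eq_zero_right (hy hij)
  change y i = y v ↔ y j ≠ y v
  rcases apply_eq_or_eq_neg_of_reachable hy (SimpleGraph.ConnectedComponent.exact i.2) with hi | hi
  · simp [hj, hi, hne]
  · simp [hj, hi, hne]

variable (R G)

/-- Evaluation of alternating weightings at one chosen vertex of every bipartite component. -/
noncomputable def evalBipartite : alternatingWeights R G →ₗ[R] (BipartiteComponent G → R) :=
  LinearMap.funLeft R R (fun c : BipartiteComponent G => c.1.out) ∘ₗ
    (alternatingWeights R G).subtype

theorem evalBipartite_injective [NoZeroDivisors R] [NeZero (2 : R)] :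
    Function.Injective (evalBipartite R G) := by
  refine (injective_iff_map_eq_zero _).2 fun ⟨y, hy⟩ h0 => ?_
  ext v
  by_contra hv
  let c : BipartiteComponent G :=
    ⟨G.connectedComponentMk v, isBipartite_induce_supp_of_apply_ne_zero hy hv⟩
  have hroot : y c.1.out = 0 := congrFun h0 c
  have hreach : G.Reachable v c.1.out :=
    SimpleGraph.ConnectedComponent.exact (Quot.out_eq c.1).symm
  apply hv
  simpa [hroot] using apply_eq_or_eq_neg_of_reachable hy hreach

theorem evalBipartite_surjective : Function.Surjective (evalBipartite R G) := by
  classical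
  intro a
  choose τ hτ using fun c : BipartiteComponent G => c.2.exists_sign
  let w (c : G.ConnectedComponent) (v : V) : R :=
    if h : IsBipartite (G.induce c.supp) then (τ ⟨c, h⟩ v * τ ⟨c, h⟩ c.out) • a ⟨c, h⟩ else 0
  have hw : (fun v => w (G.connectedComponentMk v) v) ∈ alternatingWeights R G := by
    intro i j hij
    have hji : G.connectedComponentMk j = G.connectedComponentMk i :=
      SimpleGraph.ConnectedComponent.sound hij.symm.reachable
    dsimp only
    rw [hji]
    by_cases h : IsBipartite (G.induce (G.connectedComponentMk i).supp)
    · simp [w, h, hτ ⟨_, h⟩ rfl hji hij]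
    · simp [w, h]
  refine ⟨⟨_, hw⟩, funext fun c => ?_⟩
  calc
    w (G.connectedComponentMk c.1.out) c.1.out = w c.1 c.1.out :=
      congrArg (w · c.1.out) (Quot.out_eq c.1)
    _ = a c := by simp [w, c.2]

theorem finrank_alternatingWeights [NoZeroDivisors R] [NeZero (2 : R)] [StrongRankCondition R]
    [Finite (BipartiteComponent G)] :
    finrank R (alternatingWeights R G) = Nat.card (BipartiteComponent G) := by
  have := Fintype.ofFinite (BipartiteComponent G)
  let e := LinearEquiv.ofBijective (evalBipartite R G)
    ⟨evalBipartite_injective R G, evalBipartite_surjective R G⟩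
  rw [e.finrank_eq, finrank_fintype_fun_eq_card, Nat.card_eq_fintype_card]

end AlternatingWeights

section IncidenceMatrix

variable {V : Type*} [DecidableEq V]

theorem incMatrix_col_mk_of_adj {R : Type*} [AddMonoidWithOne R] {G : SimpleGraph V}
    [DecidableRel G.Adj] {i j : V} (hij : G.Adj i j) :
    (G.incMatrix R).col s(i, j) = Pi.single i 1 + Pi.single j 1 := by
  ext v
  have hne := hij.ne
  simp only [col_apply, SimpleGraph.incMatrix_apply', SimpleGraph.mk'_mem_incidenceSet_iff, hij,
    true_and, Pi.add_apply, Pi.single_apply]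
  split_ifs <;> simp_all

theorem incMatrix_col_of_notMem_edgeSet {R : Type*} [MulZeroOneClass R] {G : SimpleGraph V}
    [DecidableRel G.Adj] {e : Sym2 V} (he : e ∉ G.edgeSet) : (G.incMatrix R).col e = 0 :=
  funext fun _ => G.incMatrix_of_notMem_incidenceSet fun h => he h.1

theorem ker_mulVecLin_transpose_incMatrix {R : Type*} [CommRing R] [Fintype V]
    (G : SimpleGraph V) [DecidableRel G.Adj] :
    (G.incMatrix R)ᵀ.mulVecLin.ker = alternatingWeights R G := by
  have hadj (y : V → R) {i j : V} (hij : G.Adj i j) :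
      ((G.incMatrix R)ᵀ *ᵥ y) s(i, j) = y i + y j := by
    change (G.incMatrix R).col s(i, j) ⬝ᵥ y = _
    simp [incMatrix_col_mk_of_adj hij, add_dotProduct]
  ext y
  rw [LinearMap.mem_ker, mulVecLin_apply, mem_alternatingWeights]
  refine ⟨fun h i j hij => by rw [← hadj y hij, h, Pi.zero_apply], fun h => funext fun e => ?_⟩
  by_cases he : e ∈ G.edgeSet
  · induction e with | _ i j
    exact (hadj y he).trans (h he)
  · change (G.incMatrix R).col e ⬝ᵥ y = 0
    rw [incMatrix_col_of_notMem_edgeSet he, zero_dotProduct]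

theorem rank_incMatrix_add_card_bipartiteComponent (K : Type*) [Field K] [NeZero (2 : K)]
    [Fintype V] (G : SimpleGraph V) [DecidableRel G.Adj] :
    (G.incMatrix K).rank + Nat.card (BipartiteComponent G) = Fintype.card V := by
  rw [← rank_transpose, rank, ← finrank_alternatingWeights K G,
    ← ker_mulVecLin_transpose_incMatrix, LinearMap.finrank_range_add_finrank_ker,
    finrank_fintype_fun_eq_card]

end IncidenceMatrix

theorem sum_rho {d : ℕ} (e : Sym2 (Fin d)) : ∑ i, rho e i = 2 := by
  induction e with | _ i j
  simp [rho, Finset.sum_add_distrib, one_add_one_eq_two]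

theorem span_rho_image_edgeSet {d : ℕ} (G : SimpleGraph (Fin d)) [DecidableRel G.Adj] :
    span ℝ (rho '' G.edgeSet) = span ℝ (Set.range (G.incMatrix ℝ).col) := by
  have hcol {e : Sym2 (Fin d)} (he : e ∈ G.edgeSet) : (G.incMatrix ℝ).col e = rho e := by
    induction e with | _ i j
    exact incMatrix_col_mk_of_adj he
  apply le_antisymm
  · refine span_mono ?_
    rintro _ ⟨e, he, rfl⟩
    exact ⟨e, hcol he⟩
  · refine span_le.2 ?_
    rintro _ ⟨e, rfl⟩
    by_cases he : e ∈ G.edgeSet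
    · exact hcol he ▸ subset_span (Set.mem_image_of_mem rho he)
    · exact incMatrix_col_of_notMem_edgeSet (R := ℝ) he ▸ zero_mem _

/-- For a finite simple graph `G` on `[d]` with at least one edge, the
dimension of the affine hull of `𝒫_G` is `d - r - 1`, where `r` is the number of bipartite
connected components of `G`. -/
theorem dim_edgePolytope {d : ℕ} (G : SimpleGraph (Fin d)) (h : G.edgeSet.Nonempty) :
    Module.finrank ℝ (affineSpan ℝ (edgePolytope G)).direction =
      d - Nat.card {c : G.ConnectedComponent // IsBipartite (G.induce c.supp)} - 1 := by
  classical
  have hvector := finrank_vectorSpan_add_one_eq_finrank_span (h.image rho)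
    (Fintype.linearCombination ℝ (1 : Fin d → ℝ)) two_ne_zero
    (Set.forall_mem_image.2 fun e _ => by simp [Fintype.linearCombination_apply, sum_rho])
  have hrank := rank_incMatrix_add_card_bipartiteComponent ℝ G
  rw [span_rho_image_edgeSet, ← rank_eq_finrank_span_cols] at hvector
  rw [Fintype.card_fin] at hrank
  change _ = d - Nat.card (BipartiteComponent G) - 1
  rw [edgePolytope, affineSpan_convexHull, direction_affineSpan]
  omega
end

section
/- Let G be a finite connected simple graph with at least one edge, let {i,j} be any edge of G, and let G′ be the graph obtained by attaching a 4-cycle to G at the edge {i,j}. Then the edge polytope 𝒫_{G′} is type II decomposable, regardless of which edge {i,j} is chosen. -/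
/-- Type II decomposability: a separating hyperplane through `0` with all `aᵢ ∈ {0,1,-1}`,
some `aᵢ = 0`, and no edge with signature `{1,1}` or `{-1,-1}`. -/
def TypeIIDecomposable {d : ℕ} (G : SimpleGraph (Fin d)) : Prop :=
  ∃ a : Fin d → ℝ, (∀ i, a i = 0 ∨ a i = 1 ∨ a i = -1) ∧ (∃ i, a i = 0) ∧
    (∀ i j, G.Adj i j → ¬(a i = 1 ∧ a j = 1) ∧ ¬(a i = -1 ∧ a j = -1)) ∧
    IsSepHyperplane G a 0

/-- Attaching a 4-cycle to `G` at the edge `{i,j}`: add two new vertices `x₁ = d`, `x₂ = d+1`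
and the three edges `{i,x₁}`, `{x₁,x₂}`, `{x₂,j}`. -/
def attachFourCycle {d : ℕ} (G : SimpleGraph (Fin d)) (i j : Fin d) :
    SimpleGraph (Fin (d + 2)) :=
  SimpleGraph.fromEdgeSet
    ((Sym2.map (Fin.castLE (by omega : d ≤ d + 2))) '' G.edgeSet ∪
      {s(Fin.castLE (by omega) i, (⟨d, by omega⟩ : Fin (d + 2))),
       s((⟨d, by omega⟩ : Fin (d + 2)), (⟨d + 1, by omega⟩ : Fin (d + 2))),
       s((⟨d + 1, by omega⟩ : Fin (d + 2)), Fin.castLE (by omega) j)})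

/-!
Let `f x = x_{x₁} - x_{x₂}`, where `x₁`, `x₂` are the new vertices. On the vertices of `𝒫_{G'}` it
takes the value `1` only at `ρ {i,x₁}`, the value `-1` only at `ρ {x₂,j}`, and `0` elsewhere.
The two exceptional edges are opposite in the attached 4-cycle, so
`ρ {i,x₁} + ρ {x₂,j} = ρ {x₁,x₂} + ρ {i,j}`: the segment between the exceptional vertices meets the
hyperplane `f = 0` at the midpoint of two vertices lying on it. Hence cutting along `f = 0` creates
no new vertices.
-/

open Set
open scoped Pointwise

section HalfSpaceSlice

variable {𝕜 E : Type*} [Field 𝕜] [LinearOrder 𝕜] [IsStrictOrderedRing 𝕜] [AddCommGroup E]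
  [Module 𝕜 E]

/-- When `f v < 0 ≤ f u`, the segment from `u` to `v` meets `f = 0` at
`(f u - f v)⁻¹ • (f u • v - f v • u)`; without the division, the condition that this crossing
point lie in `C` becomes linear in `u`. -/
theorem convex_setOf_smul_sub_smul_mem {C : Set E} (hC : Convex 𝕜 C) (f : E →ₗ[𝕜] 𝕜) (v : E) :
    Convex 𝕜 {u | f v ≤ f u ∧ f u • v - f v • u ∈ (f u - f v) • C} := by
  rintro u₁ ⟨hle₁, hu₁⟩ u₂ ⟨hle₂, hu₂⟩ a b ha hb hab
  have hlevel : f (a • u₁ + b • u₂) - f v = a * (f u₁ - f v) + b * (f u₂ - f v) := by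
    simp only [map_add, map_smul, smul_eq_mul]
    linear_combination f v * hab
  have hcross : f (a • u₁ + b • u₂) • v - f v • (a • u₁ + b • u₂) =
      a • (f u₁ • v - f v • u₁) + b • (f u₂ • v - f v • u₂) := by
    simp only [map_add, map_smul, smul_eq_mul]
    module
  have hnonneg₁ : 0 ≤ a * (f u₁ - f v) := mul_nonneg ha (sub_nonneg.2 hle₁)
  have hnonneg₂ : 0 ≤ b * (f u₂ - f v) := mul_nonneg hb (sub_nonneg.2 hle₂)
  refine ⟨sub_nonneg.1 (hlevel ▸ add_nonneg hnonneg₁ hnonneg₂), ?_⟩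
  rw [hlevel, hcross, hC.add_smul hnonneg₁ hnonneg₂, mul_smul, mul_smul]
  exact add_mem_add (smul_mem_smul_set hu₁) (smul_mem_smul_set hu₂)

theorem smul_sub_smul_mem_of_mem_convexHull {C S S' : Set E} (hC : Convex 𝕜 C) (f : E →ₗ[𝕜] 𝕜)
    (hle : ∀ u ∈ S, ∀ v ∈ S', f v ≤ f u)
    (h : ∀ u ∈ S, ∀ v ∈ S', f u • v - f v • u ∈ (f u - f v) • C) {u v : E}
    (hu : u ∈ convexHull 𝕜 S) (hv : v ∈ convexHull 𝕜 S') :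
    f u • v - f v • u ∈ (f u - f v) • C := by
  have hleft : ∀ v ∈ S', f v ≤ f u ∧ f u • v - f v • u ∈ (f u - f v) • C := fun v hv =>
    convexHull_min (s := S) (fun u hu => And.intro (hle u hu v hv) (h u hu v hv))
      (convex_setOf_smul_sub_smul_mem hC f v) hu
  -- Replacing `f` by `-f` exchanges the roles of `u` and `v`.
  have hright := convexHull_min (s := S') (fun v hv => by simpa [neg_add_eq_sub] using hleft v hv)
    (convex_setOf_smul_sub_smul_mem hC (-f) u) hv
  simpa [neg_add_eq_sub] using hright.2

theorem mem_of_mem_segment_of_smul_sub_smul_mem {C : Set E} (hC : Convex 𝕜 C) (f : E →ₗ[𝕜] 𝕜)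
    {u v x : E} (hu : u ∈ C) (hfv : f v < 0)
    (huv : f u • v - f v • u ∈ (f u - f v) • C) (hx : x ∈ segment 𝕜 u v) (hfx : 0 ≤ f x) :
    x ∈ C := by
  obtain ⟨a, b, ha, hb, hab, rfl⟩ := hx
  obtain ⟨z, hz, hzuv⟩ := mem_smul_set.1 huv
  replace hfx : 0 ≤ a * f u + b * f v := by simpa using hfx
  obtain rfl | hb := hb.eq_or_lt
  · simpa [show a = 1 by linarith] using hu
  have hfu : 0 < f u := by
    have hbv : b * f v < 0 := mul_neg_of_pos_of_neg hb hfv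
    exact pos_of_mul_pos_right (by linarith : 0 < a * f u) ha
  have hv : v = (f u)⁻¹ • (f v • u + (f u - f v) • z) := by
    rw [hzuv, add_sub_cancel, inv_smul_smul₀ hfu.ne']
  have hcombo : a • u + b • v =
      ((a * f u + b * f v) / f u) • u + (b * (f u - f v) / f u) • z := by
    nth_rw 1 [hv]
    match_scalars <;> field_simp
  rw [hcombo]
  refine hC hu hz (div_nonneg hfx hfu.le) (div_nonneg (mul_nonneg hb.le (by linarith)) hfu.le) ?_
  field_simp
  linear_combination f u * hab

theorem convexHull_inter_nonneg {T : Set E} (f : E →ₗ[𝕜] 𝕜)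
    (h : ∀ u ∈ T, ∀ v ∈ T, 0 < f u → f v < 0 →
      f u • v - f v • u ∈ (f u - f v) • convexHull 𝕜 (T ∩ {x | 0 ≤ f x})) :
    convexHull 𝕜 T ∩ {x | 0 ≤ f x} = convexHull 𝕜 (T ∩ {x | 0 ≤ f x}) := by
  refine Subset.antisymm ?_ (subset_inter (convexHull_mono inter_subset_left)
    (convexHull_min inter_subset_right (convex_halfSpace_ge f.isLinear 0)))
  rintro x ⟨hxT, hfx⟩
  have hneg : convexHull 𝕜 (T ∩ {x | f x < 0}) ⊆ {x | f x < 0} :=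
    convexHull_min inter_subset_right (convex_halfSpace_lt f.isLinear 0)
  have hT : (T ∩ {x | 0 ≤ f x}) ∪ (T ∩ {x | f x < 0}) = T := by
    ext y
    simpa [← and_or_left] using fun _ => le_or_gt 0 (f y)
  rcases (T ∩ {x | 0 ≤ f x}).eq_empty_or_nonempty with hempty | hpos_ne
  · rw [hempty, empty_union] at hT
    exact absurd (hneg (convexHull_mono hT.ge hxT)) (not_lt.2 hfx)
  rcases (T ∩ {x | f x < 0}).eq_empty_or_nonempty with hempty | hneg_ne
  · rw [hempty, union_empty] at hT
    exact convexHull_mono hT.ge hxT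
  rw [← hT, convexHull_union hpos_ne hneg_ne] at hxT
  obtain ⟨u, hu, v, hv, hx⟩ := mem_convexJoin.1 hxT
  refine mem_of_mem_segment_of_smul_sub_smul_mem (convex_convexHull 𝕜 _) f hu (hneg hv)
    (smul_sub_smul_mem_of_mem_convexHull (convex_convexHull 𝕜 _) f
      (fun u hu v hv => hv.2.le.trans hu.2) ?_ hu hv) hx hfx
  rintro u ⟨huT, hfu⟩ v ⟨hvT, hfv⟩
  obtain hfu | hfu := (show 0 ≤ f u from hfu).eq_or_lt
  · rw [← hfu, zero_smul, zero_sub, zero_sub, ← neg_smul]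
    exact smul_mem_smul_set (subset_convexHull 𝕜 _ ⟨huT, hfu.le⟩)
  · exact h u huT v hvT hfu hfv

theorem convexHull_inter_nonneg_of_exchange {T : Set E} (f : E →ₗ[𝕜] 𝕜)
    (h : ∀ u ∈ T, ∀ v ∈ T, 0 < f u → f v < 0 →
      ∃ p ∈ T, ∃ q ∈ T, f p = 0 ∧ f q = 0 ∧ u + v = p + q) :
    convexHull 𝕜 T ∩ {x | 0 ≤ f x} = convexHull 𝕜 (T ∩ {x | 0 ≤ f x}) := by
  refine convexHull_inter_nonneg f fun u hu v hv hfu hfv => ?_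
  obtain ⟨p, hp, q, hq, hfp, hfq, huv⟩ := h u hu v hv hfu hfv
  have hf : f v = -f u := by
    have := congrArg f huv
    simp only [map_add, hfp, hfq] at this
    linarith
  have hcross : f u • v - f v • u = f u • p + f u • q := by
    rw [hf, ← smul_add, ← huv]
    module
  rw [hcross, hf, sub_neg_eq_add, (convex_convexHull 𝕜 _).add_smul hfu.le hfu.le]
  exact add_mem_add (smul_mem_smul_set (subset_convexHull 𝕜 _ ⟨hp, hfp.ge⟩))
    (smul_mem_smul_set (subset_convexHull 𝕜 _ ⟨hq, hfq.ge⟩))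

end HalfSpaceSlice

section IntrinsicInterior

theorem openSegment_subset_intrinsicInterior {E : Type*} [AddCommGroup E] [Module ℝ E]
    [TopologicalSpace E] [IsTopologicalAddGroup E] [ContinuousSMul ℝ E]
    {s : Set E} (hs : Convex ℝ s) {v y : E} (hv : v ∈ s) (hy : y ∈ intrinsicInterior ℝ s) :
    openSegment ℝ v y ⊆ intrinsicInterior ℝ s := by
  lift v to affineSpan ℝ s using subset_affineSpan ℝ s hv
  have : Nonempty (affineSpan ℝ s) := ⟨v⟩
  obtain ⟨y, hy_int, rfl⟩ := mem_intrinsicInterior.1 hy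
  rw [openSegment_eq_image_lineMap]
  rintro _ ⟨a, ⟨ha₀, ha₁⟩, rfl⟩
  have hcoe (z : affineSpan ℝ s) :
      (AffineMap.homothety v a z : E) = AffineMap.lineMap (v : E) (z : E) a := by
    rw [AffineMap.homothety_eq_lineMap]
    exact (affineSpan ℝ s).subtype.apply_lineMap v z a
  -- The homothety centred at `v` is open and maps `s` into itself.
  refine mem_intrinsicInterior.2 ⟨AffineMap.homothety v a y, ?_, hcoe y⟩
  refine interior_maximal ?_ (AffineMap.homothety_isOpenMap v a ha₀.ne' _ isOpen_interior)
    (mem_image_of_mem _ hy_int)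
  rintro _ ⟨z, hz, rfl⟩
  have hzs : (z : E) ∈ s := mem_preimage.1 (interior_subset hz)
  rw [mem_preimage, hcoe]
  exact hs.lineMap_mem hv hzs ⟨ha₀.le, ha₁.le⟩

theorem exists_mem_openSegment_apply_eq {𝕜 E : Type*} [Field 𝕜] [LinearOrder 𝕜]
    [IsStrictOrderedRing 𝕜] [AddCommGroup E] [Module 𝕜 E] (f : E →ₗ[𝕜] 𝕜) {u v : E} {c : 𝕜}
    (hu : f u < c) (hv : c < f v) : ∃ x ∈ openSegment 𝕜 u v, f x = c := by
  have himage : f '' openSegment 𝕜 u v = Ioo (f u) (f v) :=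
    (image_openSegment 𝕜 f.toAffineMap u v).trans (openSegment_eq_Ioo (hu.trans hv))
  exact himage.symm.subset ⟨hu, hv⟩

theorem exists_mem_intrinsicInterior_apply_eq {E : Type*} [NormedAddCommGroup E]
    [NormedSpace ℝ E] [FiniteDimensional ℝ E] {s : Set E} (hs : Convex ℝ s) (f : E →ₗ[ℝ] ℝ)
    {u v : E} {c : ℝ} (hu : u ∈ s) (hv : v ∈ s) (hfu : f u < c) (hfv : c < f v) :
    ∃ x ∈ intrinsicInterior ℝ s, f x = c := by
  obtain ⟨y, hy⟩ := Set.Nonempty.intrinsicInterior hs ⟨u, hu⟩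
  obtain hfy | hfy | hfy := lt_trichotomy (f y) c
  · obtain ⟨x, hx, hfx⟩ := exists_mem_openSegment_apply_eq f hfy hfv
    exact ⟨x, openSegment_subset_intrinsicInterior hs hv hy (openSegment_symm ℝ y v ▸ hx), hfx⟩
  · exact ⟨y, hy, hfy⟩
  · obtain ⟨x, hx, hfx⟩ := exists_mem_openSegment_apply_eq f hfu hfy
    exact ⟨x, openSegment_subset_intrinsicInterior hs hu hy hx, hfx⟩

end IntrinsicInterior

section EdgePolytope

variable {d : ℕ}

theorem exists_rho_apply_eq_intCast (e : Sym2 (Fin d)) (k : Fin d) : ∃ n : ℤ, rho e k = n := by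
  induction e with
  | _ x y =>
    refine ⟨(Pi.single x 1 + Pi.single y 1 : Fin d → ℤ) k, ?_⟩
    simp [rho, Pi.single_apply]

theorem dotProduct_rho (a : Fin d → ℝ) (x y : Fin d) : a ⬝ᵥ rho s(x, y) = a x + a y := by
  simp [rho, dotProduct_add]

theorem isIntegralSet_convexHull {T : Set (Fin d → ℝ)}
    (hT : ∀ x ∈ T, ∀ i, ∃ n : ℤ, x i = (n : ℝ)) : IsIntegralSet (convexHull ℝ T) :=
  fun x hx => hT x (extremePoints_convexHull_subset hx)

/-- The combinatorial condition under which the hyperplane `a ⬝ᵥ x = 0` creates no new vertices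
in `𝒫_G`: edges `e`, `e'` strictly on opposite sides can be exchanged for two edges on it. As
`rho e + rho e' = rho p + rho q` is an equality of degree vectors, disjoint `e` and `e'` are then
opposite sides of a 4-cycle of `G` whose other two sides are `p` and `q`. -/
def HasZeroExchange (G : SimpleGraph (Fin d)) (a : Fin d → ℝ) : Prop :=
  ∀ e ∈ G.edgeSet, ∀ e' ∈ G.edgeSet, 0 < a ⬝ᵥ rho e → a ⬝ᵥ rho e' < 0 →
    ∃ p ∈ G.edgeSet, ∃ q ∈ G.edgeSet,
      a ⬝ᵥ rho p = 0 ∧ a ⬝ᵥ rho q = 0 ∧ rho e + rho e' = rho p + rho q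

theorem HasZeroExchange.neg {G : SimpleGraph (Fin d)} {a : Fin d → ℝ} (h : HasZeroExchange G a) :
    HasZeroExchange G (-a) := by
  intro e he e' he' hpos hneg
  simp only [neg_dotProduct, Left.neg_pos_iff, Left.neg_neg_iff, neg_eq_zero] at hpos hneg ⊢
  simpa only [add_comm] using h e' he' e he hneg hpos

theorem isIntegralSet_edgePolytope_inter_nonneg {G : SimpleGraph (Fin d)}
    {a : Fin d → ℝ} (h : HasZeroExchange G a) :
    IsIntegralSet (edgePolytope G ∩ {x | 0 ≤ a ⬝ᵥ x}) := by
  have hslice : edgePolytope G ∩ {x | 0 ≤ a ⬝ᵥ x} =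
      convexHull ℝ (rho '' G.edgeSet ∩ {x | 0 ≤ a ⬝ᵥ x}) := by
    refine convexHull_inter_nonneg_of_exchange (dotProductBilin ℝ ℝ a) ?_
    rintro _ ⟨e, he, rfl⟩ _ ⟨e', he', rfl⟩ hpos hneg
    obtain ⟨p, hp, q, hq, hpq⟩ := h e he e' he' hpos hneg
    exact ⟨_, mem_image_of_mem rho hp, _, mem_image_of_mem rho hq, hpq⟩
  rw [hslice]
  refine isIntegralSet_convexHull ?_
  rintro _ ⟨⟨e, -, rfl⟩, -⟩
  exact exists_rho_apply_eq_intCast e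

theorem isSepHyperplane_zero_of_exchange {G : SimpleGraph (Fin d)} {a : Fin d → ℝ}
    (hpos : ∃ e ∈ G.edgeSet, 0 < a ⬝ᵥ rho e) (hneg : ∃ e ∈ G.edgeSet, a ⬝ᵥ rho e < 0)
    (h : HasZeroExchange G a) : IsSepHyperplane G a 0 := by
  obtain ⟨e, he, hae⟩ := hpos
  obtain ⟨e', he', hae'⟩ := hneg
  have mem_polytope {e : Sym2 (Fin d)} (he : e ∈ G.edgeSet) : rho e ∈ edgePolytope G :=
    subset_convexHull ℝ _ (mem_image_of_mem rho he)
  refine ⟨fun ha => ?_, ?_, isIntegralSet_edgePolytope_inter_nonneg h, ?_⟩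
  · simp [ha] at hae
  · exact exists_mem_intrinsicInterior_apply_eq (convex_convexHull ℝ _) (dotProductBilin ℝ ℝ a)
      (mem_polytope he') (mem_polytope he) hae' hae
  · have hflip := isIntegralSet_edgePolytope_inter_nonneg h.neg
    simp only [neg_dotProduct, Left.nonneg_neg_iff] at hflip
    exact hflip

theorem eq_of_single_sub_single_dotProduct_rho_pos {G : SimpleGraph (Fin d)} {i x y : Fin d}
    (hx : G.neighborSet x = {i, y}) {e : Sym2 (Fin d)} (he : e ∈ G.edgeSet)
    (hpos : 0 < (Pi.single x 1 - Pi.single y 1 : Fin d → ℝ) ⬝ᵥ rho e) : e = s(i, x) := by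
  have eq_of_adj {l : Fin d} (hxl : G.Adj x l)
      (hpos : 0 < (Pi.single x 1 - Pi.single y 1 : Fin d → ℝ) ⬝ᵥ rho s(x, l)) :
      s(x, l) = s(i, x) := by
    obtain rfl | rfl : l = i ∨ l = y := hx.subset hxl
    · exact Sym2.eq_swap
    · rw [dotProduct_rho] at hpos
      simp [hxl.ne, hxl.ne'] at hpos
  induction e with
  | _ k l =>
    obtain rfl | hkx := eq_or_ne k x
    · exact eq_of_adj he hpos
    obtain rfl | hlx := eq_or_ne l x
    · rw [Sym2.eq_swap] at hpos ⊢
      exact eq_of_adj he.symm hpos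
    have hnonpos {m : Fin d} (hm : m ≠ x) : (Pi.single x 1 - Pi.single y 1 : Fin d → ℝ) m ≤ 0 := by
      obtain rfl | hmy := eq_or_ne m y <;> simp [*]
    rw [dotProduct_rho] at hpos
    linarith [hnonpos hkx, hnonpos hlx]

theorem isSepHyperplane_single_sub_single {G : SimpleGraph (Fin d)} {i j x y : Fin d}
    (hij : G.Adj i j) (hx : G.neighborSet x = {i, y}) (hy : G.neighborSet y = {j, x})
    (hiy : i ≠ y) (hjx : j ≠ x) : IsSepHyperplane G (Pi.single x 1 - Pi.single y 1) 0 := by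
  have hxi : G.Adj x i := hx.superset (by simp)
  have hxy : G.Adj x y := hx.superset (by simp)
  have hyj : G.Adj y j := hy.superset (by simp)
  refine isSepHyperplane_zero_of_exchange ⟨s(x, i), hxi, ?_⟩ ⟨s(y, j), hyj, ?_⟩ ?_
  · rw [dotProduct_rho]
    simp [hxy.ne, hxi.ne', hiy]
  · rw [dotProduct_rho]
    simp [hxy.ne', hyj.ne', hjx]
  intro e he e' he' hpos hneg
  rw [eq_of_single_sub_single_dotProduct_rho_pos hx he hpos,
    eq_of_single_sub_single_dotProduct_rho_pos hy he'
      (by rwa [← neg_sub, neg_dotProduct, Left.neg_pos_iff])]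
  refine ⟨s(x, y), hxy, s(i, j), hij, ?_, ?_, ?_⟩
  · rw [dotProduct_rho]
    simp [hxy.ne, hxy.ne']
  · rw [dotProduct_rho]
    simp [hxi.ne', hiy, hyj.ne', hjx]
  · simp only [rho, Sym2.lift_mk]
    abel

theorem typeIIDecomposable_of_neighborSet_eq {G : SimpleGraph (Fin d)} {i j x y : Fin d}
    (hij : G.Adj i j) (hx : G.neighborSet x = {i, y}) (hy : G.neighborSet y = {j, x})
    (hiy : i ≠ y) (hjx : j ≠ x) : TypeIIDecomposable G := by
  have hix : i ≠ x := (show G.Adj x i from hx.superset (by simp)).ne'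
  set a : Fin d → ℝ := Pi.single x 1 - Pi.single y 1 with ha
  have ha_values (k : Fin d) : a k = 0 ∨ a k = 1 ∨ a k = -1 := by grind [Pi.sub_apply]
  have eq_x {k : Fin d} (hk : a k = 1) : k = x := by grind [Pi.sub_apply]
  have eq_y {k : Fin d} (hk : a k = -1) : k = y := by grind [Pi.sub_apply]
  refine ⟨a, ha_values, ⟨i, by simp [ha, hix, hiy]⟩, fun k l hkl => ⟨?_, ?_⟩,
    isSepHyperplane_single_sub_single hij hx hy hiy hjx⟩
  · exact fun ⟨hk, hl⟩ => hkl.ne ((eq_x hk).trans (eq_x hl).symm)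
  · exact fun ⟨hk, hl⟩ => hkl.ne ((eq_y hk).trans (eq_y hl).symm)

end EdgePolytope

section AttachFourCycle

variable {d : ℕ} (G : SimpleGraph (Fin d)) (i j : Fin d)

theorem mk_notMem_image_map_castLE {m n : ℕ} (hmn : m ≤ n) (S : Set (Sym2 (Fin m))) {u v : Fin n}
    (hu : m ≤ u) : s(u, v) ∉ Sym2.map (Fin.castLE hmn) '' S := by
  rintro ⟨e, -, he⟩
  obtain ⟨w, -, rfl⟩ := Sym2.mem_map.1 (he ▸ Sym2.mem_mk_left u v)
  exact hu.not_gt w.isLt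

theorem attachFourCycle_adj_castLE {u v : Fin d} (huv : G.Adj u v) :
    (attachFourCycle G i j).Adj (Fin.castLE (by omega) u) (Fin.castLE (by omega) v) := by
  rw [attachFourCycle, SimpleGraph.fromEdgeSet_adj]
  exact ⟨.inl ⟨s(u, v), huv, rfl⟩, fun h => huv.ne (Fin.castLE_injective _ h)⟩

theorem neighborSet_attachFourCycle_fst :
    (attachFourCycle G i j).neighborSet ⟨d, by omega⟩ =
      {Fin.castLE (by omega) i, ⟨d + 1, by omega⟩} := by
  ext k
  simp only [attachFourCycle, SimpleGraph.mem_neighborSet, SimpleGraph.fromEdgeSet_adj, mem_union,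
    mk_notMem_image_map_castLE, mem_insert_iff, mem_singleton_iff, Sym2.eq_iff, ne_eq,
    Fin.ext_iff, Fin.val_castLE, le_refl, false_or, true_and]
  omega

theorem neighborSet_attachFourCycle_snd :
    (attachFourCycle G i j).neighborSet ⟨d + 1, by omega⟩ =
      {Fin.castLE (by omega) j, ⟨d, by omega⟩} := by
  ext k
  simp only [attachFourCycle, SimpleGraph.mem_neighborSet, SimpleGraph.fromEdgeSet_adj, mem_union,
    mk_notMem_image_map_castLE, mem_insert_iff, mem_singleton_iff, Sym2.eq_iff, ne_eq,
    Fin.ext_iff, Fin.val_castLE, Nat.le_succ, false_or, true_and]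
  omega

theorem attachFourCycle_typeII_general (hij : G.Adj i j) :
    TypeIIDecomposable (attachFourCycle G i j) :=
  typeIIDecomposable_of_neighborSet_eq (attachFourCycle_adj_castLE G i j hij)
    (neighborSet_attachFourCycle_fst G i j) (neighborSet_attachFourCycle_snd G i j)
    (Fin.ne_of_lt (i.isLt.trans d.lt_succ_self)) (Fin.ne_of_lt j.isLt)

end AttachFourCycle

/-- Let `G` be a finite connected simple graph with an edge `{i,j}`, and let
`G'` be obtained by attaching a 4-cycle to `G` at `{i,j}`. Then `𝒫_{G'}` is type II
decomposable, regardless of which edge is chosen. -/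
theorem attachFourCycle_typeII {d : ℕ} (G : SimpleGraph (Fin d)) (hG : G.Connected)
    (i j : Fin d) (hij : G.Adj i j) :
    TypeIIDecomposable (attachFourCycle G i j) :=
  attachFourCycle_typeII_general G i j hij
end

section
/- For every d ≥ 4, the edge polytope 𝒫_{K_d} of the complete graph K_d on d vertices is type I decomposable but not type II decomposable. -/
/-- Type I decomposability: a separating hyperplane through `0` with all `aᵢ ∈ {1,-1}`. -/
def TypeIDecomposable {d : ℕ} (G : SimpleGraph (Fin d)) : Prop :=
  ∃ a : Fin d → ℝ, (∀ i, a i = 1 ∨ a i = -1) ∧ IsSepHyperplane G a 0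

/-!
The edge polytope of `K_d` is the hypersimplex `{x ∈ [0,1]^d : ∑ xᵢ = 2}`.

A signature `a ∈ {1,-1}^d` with positive part `S` cuts it along `∑_{i ∈ S} xᵢ = 1`. At a point of
a slice `∑_{i ∈ S} xᵢ ≥ 1` with a fractional coordinate, one of the sums that are forced to be
integers contains a second fractional coordinate, and moving mass between the two in both
directions stays in the slice. So vertices of slices are integral, and `K_d` is type I decomposable
as soon as `S` and its complement have at least two elements each.

A type II signature on `K_d` has at most one `1` and at most one `-1`, and since its hyperplane
meets the interior it has both. So the hyperplane is `xᵢ = xⱼ`, and as some other `aₖ` vanishes,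
the midpoint of `𝐞ᵢ + 𝐞ₖ` and `𝐞ⱼ + 𝐞ₖ` is a non-integral vertex of either slice.
-/

open scoped Finset Topology

section Convexity

lemma eq_zero_of_mem_extremePoints_of_eventually_add_smul_mem {E : Type*} [AddCommGroup E]
    [Module ℝ E] {P : Set E} {x v : E} (hx : x ∈ P.extremePoints ℝ)
    (h : ∀ᶠ t : ℝ in 𝓝 0, x + t • v ∈ P) : v = 0 := by
  have h_neg : ∀ᶠ t : ℝ in 𝓝 0, x + (-t) • v ∈ P :=
    (continuous_neg.tendsto' (0 : ℝ) 0 neg_zero).eventually h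
  obtain ⟨t, ⟨hpos, hneg⟩, ht⟩ :=
    (((h.and h_neg).filter_mono nhdsWithin_le_nhds).and
      (self_mem_nhdsWithin (s := Set.Ioi (0 : ℝ)))).exists
  have hmid : x ∈ openSegment ℝ (x + t • v) (x + (-t) • v) :=
    ⟨1 / 2, 1 / 2, by norm_num, by norm_num, by norm_num, by module⟩
  have htv : x + t • v = x := (mem_extremePoints.1 hx).2 _ hpos _ hneg hmid |>.1
  exact (smul_eq_zero.1 (add_eq_left.1 htv)).resolve_left (ne_of_gt ht)

variable {E : Type*} [NormedAddCommGroup E] [NormedSpace ℝ E] {s : Set E} {x y : E}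

lemma exists_one_lt_lineMap_mem_of_mem_intrinsicInterior (hx : x ∈ intrinsicInterior ℝ s)
    (hy : y ∈ s) : ∃ t : ℝ, 1 < t ∧ AffineMap.lineMap y x t ∈ s := by
  obtain ⟨z, hz, rfl⟩ := mem_intrinsicInterior.1 hx
  have hline (t : ℝ) : AffineMap.lineMap y (z : E) t ∈ affineSpan ℝ s :=
    AffineMap.lineMap_mem t (subset_affineSpan ℝ s hy) z.2
  have hcont : Continuous fun t : ℝ =>
      (⟨AffineMap.lineMap y (z : E) t, hline t⟩ : affineSpan ℝ s) :=
    AffineMap.lineMap_continuous.subtype_mk _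
  have hmem : ∀ᶠ t in 𝓝 (1 : ℝ), AffineMap.lineMap y (z : E) t ∈ s :=
    hcont.continuousAt.eventually_mem (s := Subtype.val ⁻¹' s)
      (by simpa using mem_interior_iff_mem_nhds.1 hz)
  obtain ⟨t, ht, ht1⟩ := ((hmem.filter_mono nhdsWithin_le_nhds).and
    (self_mem_nhdsWithin (s := Set.Ioi (1 : ℝ)))).exists
  exact ⟨t, ht1, ht⟩

lemma eq_of_isMinOn_of_mem_intrinsicInterior {f : E →ᵃ[ℝ] ℝ}
    (hx : x ∈ intrinsicInterior ℝ s) (hf : IsMinOn f s x) (hy : y ∈ s) : f y = f x := by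
  obtain ⟨t, ht, hmem⟩ := exists_one_lt_lineMap_mem_of_mem_intrinsicInterior hx hy
  have hbeyond : f x ≤ f (AffineMap.lineMap y x t) := hf hmem
  rw [AffineMap.apply_lineMap, AffineMap.lineMap_apply_module'] at hbeyond
  have : 0 ≤ (t - 1) * (f x - f y) := by simp only [smul_eq_mul] at hbeyond; linarith
  exact le_antisymm (sub_nonneg.1 (nonneg_of_mul_nonneg_right this (sub_pos.2 ht))) (hf hy)

end Convexity

lemma exists_ne_notMem_of_sum_mem {ι M : Type*} [AddCommGroup M] (H : AddSubgroup M)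
    {s : Finset ι} {x : ι → M} {i : ι} (hi : i ∈ s) (hxi : x i ∉ H) (hsum : ∑ k ∈ s, x k ∈ H) :
    ∃ j ∈ s, j ≠ i ∧ x j ∉ H := by
  classical
  by_contra! h
  have hrest : ∑ k ∈ s.erase i, x k ∈ H :=
    H.sum_mem fun k hk => h k (Finset.mem_of_mem_erase hk) (Finset.ne_of_mem_erase hk)
  rw [← Finset.add_sum_erase s x hi] at hsum
  exact hxi ((H.add_mem_cancel_right hrest).1 hsum)

section Hypersimplex

variable {ι : Type*} [Fintype ι] {n : ℕ} {x : ι → ℝ} {i j : ι}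

variable (ι n) in
/-- The hypersimplex `Δ(n, ι)`: the points of the unit cube `[0,1]^ι` with coordinate sum `n`.
For `ι = [d]` and `n = 2` it is the edge polytope of `K_d`. -/
def hypersimplex : Set (ι → ℝ) :=
  Set.Icc 0 1 ∩ {x | ∑ i, x i = n}

variable (ι n) in
lemma convex_hypersimplex : Convex ℝ (hypersimplex ι n) :=
  (convex_Icc 0 1).inter <|
    convex_hyperplane (f := fun x : ι → ℝ => ∑ i, x i)
      ⟨fun _ _ => Finset.sum_add_distrib, fun _ _ => (Finset.mul_sum _ _ _).symm⟩ n

variable (ι n) in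
lemma isCompact_hypersimplex : IsCompact (hypersimplex ι n) :=
  isCompact_Icc.inter_right <| isClosed_eq (by fun_prop) continuous_const

lemma indicator_one_mem_hypersimplex (s : Finset ι) :
    (s : Set ι).indicator 1 ∈ hypersimplex ι #s := by
  classical
  refine ⟨⟨Set.indicator_nonneg fun _ _ => zero_le_one,
    Set.indicator_le_self' fun _ _ => zero_le_one⟩, ?_⟩
  simp [Set.indicator_apply]

lemma exists_indicator_one_eq_of_mem_hypersimplex (hx : x ∈ hypersimplex ι n)
    (hint : ∀ i, ∃ z : ℤ, x i = z) : ∃ s : Finset ι, #s = n ∧ (s : Set ι).indicator 1 = x := by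
  classical
  have h01 : (({i | x i = 1} : Finset ι) : Set ι).indicator 1 = x := funext fun i => by
    obtain ⟨z, hz⟩ := hint i
    have h0 : 0 ≤ x i := hx.1.1 i
    have h1 : x i ≤ 1 := hx.1.2 i
    rw [Set.indicator_apply]
    simp only [Finset.coe_filter, Finset.mem_univ, true_and, Set.mem_ofPred_eq, Pi.one_apply]
    rw [hz] at h0 h1 ⊢
    norm_cast at h0 h1 ⊢
    split_ifs <;> omega
  have hcard := (indicator_one_mem_hypersimplex ({i | x i = 1} : Finset ι)).2
  rw [h01, Set.mem_ofPred_eq, hx.2] at hcard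
  exact ⟨_, by exact_mod_cast hcard.symm, h01⟩

lemma mem_intrinsicInterior_hypersimplex (hx : ∀ i, x i ∈ Set.Ioo 0 1) (hsum : ∑ i, x i = n) :
    x ∈ intrinsicInterior ℝ (hypersimplex ι n) := by
  have hxH : x ∈ hypersimplex ι n := ⟨⟨fun i => (hx i).1.le, fun i => (hx i).2.le⟩, hsum⟩
  refine mem_intrinsicInterior.2 ⟨⟨x, subset_affineSpan ℝ _ hxH⟩, ?_, rfl⟩
  have hspan (y) (hy : y ∈ affineSpan ℝ (hypersimplex ι n)) : ∑ i, y i = n := by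
    refine affineSpan_induction (p := fun y : ι → ℝ => ∑ i, y i = n) hy (fun y hy => hy.2) ?_
    intro c u v w hu hv hw
    simp [Finset.sum_add_distrib, ← Finset.mul_sum, hu, hv, hw]
  have hopen : IsOpen (Set.univ.pi fun _ : ι => Set.Ioo (0 : ℝ) 1) :=
    isOpen_set_pi Set.finite_univ fun _ _ => isOpen_Ioo
  refine mem_interior.2 ⟨_, fun y hy => ?_, hopen.preimage continuous_subtype_val,
    fun i _ => hx i⟩
  exact ⟨⟨fun i => (hy i trivial).1.le, fun i => (hy i trivial).2.le⟩, hspan y y.2⟩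

section Slice

/-- The part of the hypersimplex `Δ(n, ι)` in the half-space `m ≤ ∑_{k ∈ S} xₖ`. For `n = 2` and
`m = 1` this is the slice `0 ≤ ∑ aₖxₖ` of the edge polytope of a complete graph, where `aₖ` is `1`
on `S` and `-1` off `S`. -/
def hypersimplexSlice (n : ℕ) (S : Finset ι) (m : ℤ) : Set (ι → ℝ) :=
  hypersimplex ι n ∩ {x | m ≤ ∑ k ∈ S, x k}

variable {S : Finset ι} {m : ℤ}

lemma eventually_add_smul_single_sub_single_mem_hypersimplexSlice [DecidableEq ι]
    (hx : x ∈ hypersimplexSlice n S m) (hi : x i ∈ Set.Ioo 0 1)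
    (hj : x j ∈ Set.Ioo 0 1) (hS : m < ∑ k ∈ S, x k ∨ (i ∈ S ↔ j ∈ S)) :
    ∀ᶠ t : ℝ in 𝓝 0, x + t • (Pi.single i 1 - Pi.single j 1 : ι → ℝ) ∈
      hypersimplexSlice n S m := by
  set v : ι → ℝ := Pi.single i 1 - Pi.single j 1 with hv
  have hcont : Continuous fun t : ℝ => x + t • v := by fun_prop
  have hsum (T : Finset ι) (t : ℝ) : ∑ k ∈ T, (x + t • v) k =
      ∑ k ∈ T, x k + t * ((if i ∈ T then 1 else 0) - (if j ∈ T then 1 else 0)) := by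
    simp [hv, Finset.sum_add_distrib, ← Finset.mul_sum]
  have hcube : ∀ᶠ t : ℝ in 𝓝 0, ∀ k, (x + t • v) k ∈ Set.Icc 0 1 := by
    refine Filter.eventually_all.2 fun k => ?_
    by_cases hk : x k ∈ Set.Ioo 0 1
    · have hnhds : Set.Icc (0 : ℝ) 1 ∈ 𝓝 ((x + (0 : ℝ) • v) k) := by
        simpa using Icc_mem_nhds hk.1 hk.2
      exact ((continuous_apply k).comp hcont).continuousAt.eventually_mem hnhds
    · have hvk : v k = 0 := by
        have hki : k ≠ i := by rintro rfl; exact hk hi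
        have hkj : k ≠ j := by rintro rfl; exact hk hj
        simp [hv, hki, hkj]
      exact .of_forall fun t => by simpa [hvk] using ⟨hx.1.1.1 k, hx.1.1.2 k⟩
  have hhalf : ∀ᶠ t : ℝ in 𝓝 0, (m : ℝ) ≤ ∑ k ∈ S, (x + t • v) k := by
    rcases hS with hlt | hiff
    · have hcontS : Continuous fun t : ℝ => ∑ k ∈ S, (x + t • v) k := by fun_prop
      exact (hcontS.tendsto 0).eventually_const_le (by simpa using hlt)
    · exact .of_forall fun t => by rw [hsum]; simpa [hiff] using hx.2
  filter_upwards [hcube, hhalf] with t hcube_t hhalf_t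
  refine ⟨⟨⟨fun k => (hcube_t k).1, fun k => (hcube_t k).2⟩, ?_⟩, hhalf_t⟩
  rw [Set.mem_ofPred_eq, hsum]
  simpa using hx.1.2

lemma exists_ne_nonintegral_of_mem_hypersimplexSlice
    (hx : x ∈ hypersimplexSlice n S m) (hi : ¬∃ z : ℤ, x i = z) :
    ∃ j ≠ i, (¬∃ z : ℤ, x j = z) ∧ (m < ∑ k ∈ S, x k ∨ (i ∈ S ↔ j ∈ S)) := by
  classical
  have hpartner (T : Finset ι) (hiT : i ∈ T) (hT : ∃ z : ℤ, ∑ k ∈ T, x k = z) :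
      ∃ j ∈ T, j ≠ i ∧ ¬∃ z : ℤ, x j = z := by
    have hint (r : ℝ) : (∃ z : ℤ, r = z) ↔ r ∈ (Int.castAddHom ℝ).range := by
      simp only [AddMonoidHom.mem_range, Int.coe_castAddHom, eq_comm]
    simp only [hint] at hi hT ⊢
    exact exists_ne_notMem_of_sum_mem _ hiT hi hT
  have hsum : ∑ k, x k = n := hx.1.2
  have hm : (m : ℝ) ≤ ∑ k ∈ S, x k := hx.2
  rcases hm.lt_or_eq with hlt | htight
  · obtain ⟨j, -, hji, hj⟩ := hpartner Finset.univ (Finset.mem_univ i) ⟨n, by simpa using hsum⟩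
    exact ⟨j, hji, hj, .inl hlt⟩
  by_cases hiS : i ∈ S
  · obtain ⟨j, hjS, hji, hj⟩ := hpartner S hiS ⟨m, htight.symm⟩
    exact ⟨j, hji, hj, .inr (by simp [hiS, hjS])⟩
  · obtain ⟨j, hjS, hji, hj⟩ := hpartner Sᶜ (by simpa using hiS)
      ⟨n - m, by push_cast; linarith [Finset.sum_add_sum_compl S x]⟩
    exact ⟨j, hji, hj, .inr (by simpa [hiS] using hjS)⟩

lemma exists_int_eq_of_mem_extremePoints_hypersimplexSlice
    (hx : x ∈ (hypersimplexSlice n S m).extremePoints ℝ) (i : ι) :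
    ∃ z : ℤ, x i = z := by
  classical
  by_contra hi
  have hxmem := extremePoints_subset hx
  have hfrac (k : ι) (hk : ¬∃ z : ℤ, x k = z) : x k ∈ Set.Ioo 0 1 :=
    ⟨(hxmem.1.1.1 k).lt_of_ne fun h => hk ⟨0, by simpa using h.symm⟩,
      (hxmem.1.1.2 k).lt_of_ne fun h => hk ⟨1, by simpa using h⟩⟩
  obtain ⟨j, hji, hj, hS⟩ := exists_ne_nonintegral_of_mem_hypersimplexSlice hxmem hi
  have hv := eq_zero_of_mem_extremePoints_of_eventually_add_smul_mem hx
    (eventually_add_smul_single_sub_single_mem_hypersimplexSlice hxmem (hfrac i hi) (hfrac j hj) hS)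
  simpa [hji.symm] using congrFun hv i

end Slice

variable (ι n) in
lemma hypersimplex_eq_convexHull :
    hypersimplex ι n =
      convexHull ℝ ((fun s : Finset ι => (s : Set ι).indicator 1) '' {s | #s = n}) := by
  refine Set.Subset.antisymm ?_ (convexHull_min ?_ (convex_hypersimplex ι n))
  · rw [← closure_convexHull_extremePoints (isCompact_hypersimplex ι n) (convex_hypersimplex ι n)]
    refine closure_minimal (convexHull_mono fun x hx => ?_)
      ((Set.toFinite _).isClosed_convexHull ℝ)
    have hslice : hypersimplexSlice n ∅ 0 = hypersimplex ι n := by simp [hypersimplexSlice]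
    exact exists_indicator_one_eq_of_mem_hypersimplex (extremePoints_subset hx)
      (exists_int_eq_of_mem_extremePoints_hypersimplexSlice (hslice.symm ▸ hx))
  · rintro _ ⟨s, rfl, rfl⟩
    exact indicator_one_mem_hypersimplex s

lemma mem_extremePoints_hypersimplex_inter_le (hij : i ≠ j) (hx : x ∈ hypersimplex ι n)
    (hxij : x i = x j) (hx01 : ∀ l, l ≠ i → l ≠ j → x l = 0 ∨ x l = 1) :
    x ∈ (hypersimplex ι n ∩ {x | x j ≤ x i}).extremePoints ℝ := by
  refine mem_extremePoints_iff_left.2 ⟨⟨hx, hxij.ge⟩, ?_⟩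
  rintro y ⟨hy, hyij : y j ≤ y i⟩ z ⟨hz, hzij : z j ≤ z i⟩ ⟨s, t, hs, ht, hst, heq⟩
  have hcoord (l : ι) : s * y l + t * z l = x l := congrFun heq l
  have hyl (l : ι) (hl : l ≠ i ∧ l ≠ j) : y l - x l = 0 := by
    have hy0 : 0 ≤ y l := hy.1.1 l
    have hy1 : y l ≤ 1 := hy.1.2 l
    have hz0 : 0 ≤ z l := hz.1.1 l
    have hz1 : z l ≤ 1 := hz.1.2 l
    rcases hx01 l hl.1 hl.2 with h | h <;> nlinarith [hcoord l]
  have hyi_eq : y i = y j := by nlinarith [hcoord i, hcoord j]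
  have hsum : (y i - x i) + (y j - x j) = 0 := by
    rw [← Fintype.sum_eq_add i j hij hyl, Finset.sum_sub_distrib, hy.2, hx.2, sub_self]
  funext l
  by_cases hli : l = i
  · subst hli; linarith
  by_cases hlj : l = j
  · subst hlj; linarith
  exact sub_eq_zero.1 (hyl l ⟨hli, hlj⟩)

end Hypersimplex

section EdgePolytope

variable {d : ℕ}

lemma rho_mk_eq_indicator {i j : Fin d} (hij : i ≠ j) :
    rho s(i, j) = (({i, j} : Finset (Fin d)) : Set (Fin d)).indicator 1 := by
  funext k
  simp only [rho, Sym2.lift_mk, Pi.add_apply, Pi.single_apply, Set.indicator_apply]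
  by_cases hki : k = i <;> by_cases hkj : k = j <;> simp_all

lemma sum_mul_rho_mk (a : Fin d → ℝ) (i j : Fin d) :
    ∑ k, a k * rho s(i, j) k = a i + a j := by
  simp [rho, mul_add, Finset.sum_add_distrib, Pi.single_apply]

variable (d) in
lemma edgePolytope_top : edgePolytope (⊤ : SimpleGraph (Fin d)) = hypersimplex (Fin d) 2 := by
  rw [hypersimplex_eq_convexHull, edgePolytope]
  congr 1
  ext x
  constructor
  · rintro ⟨e, he, rfl⟩
    induction e with
    | h i j =>
      have hij : i ≠ j := by simpa using he
      exact ⟨{i, j}, Finset.card_pair hij, (rho_mk_eq_indicator hij).symm⟩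
  · rintro ⟨s, hs, rfl⟩
    obtain ⟨i, j, hij, rfl⟩ := Finset.card_eq_two.1 hs
    exact ⟨s(i, j), by simpa using hij, rho_mk_eq_indicator hij⟩

variable {G : SimpleGraph (Fin d)}

lemma nonneg_of_mem_edgePolytope {x : Fin d → ℝ} (hx : x ∈ edgePolytope G) : 0 ≤ x := by
  have hsingle (i : Fin d) : (0 : Fin d → ℝ) ≤ Pi.single i 1 := Pi.single_nonneg.2 zero_le_one
  refine convexHull_min ?_ (convex_Ici 0) hx
  rintro _ ⟨e, -, rfl⟩
  induction e with
  | h i j => exact add_nonneg (hsingle i) (hsingle j)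

variable {a : Fin d → ℝ} {c : ℝ}

lemma IsSepHyperplane.neg (h : IsSepHyperplane G a c) : IsSepHyperplane G (-a) (-c) := by
  obtain ⟨ha, ⟨x, hx, hxc⟩, hge, hle⟩ := h
  exact ⟨neg_ne_zero.2 ha, ⟨x, hx, by simp [hxc]⟩, by simpa using hle, by simpa using hge⟩

lemma IsSepHyperplane.eq_zero_of_nonneg (h : IsSepHyperplane G a 0) (ha : 0 ≤ a) {i j : Fin d}
    (hij : G.Adj i j) : a i = 0 := by
  obtain ⟨-, ⟨x, hx, hx0⟩, -, -⟩ := h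
  let f : (Fin d → ℝ) →ᵃ[ℝ] ℝ := (∑ k, a k • LinearMap.proj k : (Fin d → ℝ) →ₗ[ℝ] ℝ).toAffineMap
  have hf (y : Fin d → ℝ) : f y = ∑ k, a k * y k := by simp [f]
  have hmin : IsMinOn f (edgePolytope G) x := isMinOn_iff.2 fun y hy => by
    rw [hf, hf, hx0]
    exact Finset.sum_nonneg fun k _ => mul_nonneg (ha k) (nonneg_of_mem_edgePolytope hy k)
  have hedge : f (rho s(i, j)) = f x :=
    eq_of_isMinOn_of_mem_intrinsicInterior hx hmin (subset_convexHull ℝ _ ⟨s(i, j), hij, rfl⟩)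
  rw [hf, hf, hx0, sum_mul_rho_mk] at hedge
  exact ((add_eq_zero_iff_of_nonneg (ha i) (ha j)).1 hedge).1

end EdgePolytope

section TypeI

lemma sum_sign_mul {ι R : Type*} [Fintype ι] [DecidableEq ι] [Ring R] (S : Finset ι)
    (x : ι → R) :
    ∑ i, (if i ∈ S then 1 else -1) * x i = ∑ i ∈ S, x i - ∑ i ∈ Sᶜ, x i := by
  rw [← Finset.sum_add_sum_compl S, sub_eq_add_neg, ← Finset.sum_neg_distrib]
  congr 1 <;> refine Finset.sum_congr rfl fun i hi => ?_
  · simp [hi]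
  · simp [Finset.mem_compl.1 hi]

variable {d : ℕ} (S : Finset (Fin d))

lemma isIntegralSet_hypersimplex_inter_sign_nonneg :
    IsIntegralSet (hypersimplex (Fin d) 2 ∩
      {x | 0 ≤ ∑ i, (if i ∈ S then 1 else -1) * x i}) := by
  have hslice : hypersimplex (Fin d) 2 ∩ {x | 0 ≤ ∑ i, (if i ∈ S then 1 else -1) * x i} =
      hypersimplexSlice 2 S 1 := by
    refine Set.inter_congr_left ?_ ?_ <;>
    · rintro x ⟨⟨-, hx2⟩, hxS⟩
      simp only [Set.mem_ofPred_eq, sum_sign_mul, Int.cast_one, Nat.cast_ofNat] at hx2 hxS ⊢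
      linarith [Finset.sum_add_sum_compl S x]
  rw [hslice]
  exact fun x hx => exists_int_eq_of_mem_extremePoints_hypersimplexSlice hx

lemma isIntegralSet_hypersimplex_inter_sign_nonpos :
    IsIntegralSet (hypersimplex (Fin d) 2 ∩
      {x | ∑ i, (if i ∈ S then 1 else -1) * x i ≤ 0}) := by
  have hcompl (x : Fin d → ℝ) : ∑ i, (if i ∈ S then 1 else -1) * x i ≤ 0 ↔
      0 ≤ ∑ i, (if i ∈ Sᶜ then 1 else -1) * x i := by
    rw [sum_sign_mul, sum_sign_mul, compl_compl, sub_nonpos, sub_nonneg]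
  simpa only [hcompl] using isIntegralSet_hypersimplex_inter_sign_nonneg Sᶜ

variable {S}

lemma exists_mem_intrinsicInterior_hypersimplex_sum_sign_eq_zero (hS : 2 ≤ #S) (hSc : 2 ≤ #Sᶜ) :
    ∃ x ∈ intrinsicInterior ℝ (hypersimplex (Fin d) 2),
      ∑ i, (if i ∈ S then 1 else -1) * x i = 0 := by
  have hinv {m : ℕ} (hm : 2 ≤ m) : (m : ℝ)⁻¹ ∈ Set.Ioo 0 1 :=
    ⟨by positivity, inv_lt_one_of_one_lt₀ (by exact_mod_cast hm)⟩
  let x : Fin d → ℝ := fun i => if i ∈ S then (#S : ℝ)⁻¹ else (#Sᶜ : ℝ)⁻¹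
  have hxS : ∑ i ∈ S, x i = 1 := by
    rw [Finset.sum_congr rfl fun i hi => if_pos hi, Finset.sum_const, nsmul_eq_mul]
    exact mul_inv_cancel₀ (by positivity)
  have hxSc : ∑ i ∈ Sᶜ, x i = 1 := by
    rw [Finset.sum_congr rfl fun i hi => if_neg (Finset.mem_compl.1 hi), Finset.sum_const,
      nsmul_eq_mul]
    exact mul_inv_cancel₀ (by positivity)
  refine ⟨x, mem_intrinsicInterior_hypersimplex (fun i => ?_) ?_, ?_⟩
  · simp only [x]
    split_ifs
    exacts [hinv hS, hinv hSc]
  · rw [← Finset.sum_add_sum_compl S, hxS, hxSc]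
    norm_num
  · rw [sum_sign_mul, hxS, hxSc, sub_self]

lemma isSepHyperplane_top (hS : 2 ≤ #S) (hSc : 2 ≤ #Sᶜ) :
    IsSepHyperplane (⊤ : SimpleGraph (Fin d)) (fun i => if i ∈ S then 1 else -1) 0 := by
  obtain ⟨i, hi⟩ := Finset.card_pos.1 (zero_lt_two.trans_le hS)
  refine ⟨fun h => by simpa [hi] using congrFun h i, ?_⟩
  rw [edgePolytope_top]
  exact ⟨exists_mem_intrinsicInterior_hypersimplex_sum_sign_eq_zero hS hSc,
    isIntegralSet_hypersimplex_inter_sign_nonneg S, isIntegralSet_hypersimplex_inter_sign_nonpos S⟩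

end TypeI

section TypeII

variable {d : ℕ}

lemma not_isIntegralSet_hypersimplex_inter_le {i j k : Fin d} (hij : i ≠ j) (hik : i ≠ k)
    (hjk : j ≠ k) : ¬IsIntegralSet (hypersimplex (Fin d) 2 ∩ {x | x j ≤ x i}) := by
  have hvertex {l m : Fin d} (hlm : l ≠ m) : rho s(l, m) ∈ hypersimplex (Fin d) 2 := by
    rw [rho_mk_eq_indicator hlm, ← Finset.card_pair hlm]
    exact indicator_one_mem_hypersimplex {l, m}
  let x : Fin d → ℝ := (1 / 2 : ℝ) • rho s(i, k) + (1 / 2 : ℝ) • rho s(j, k)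
  have hxi : x i = 1 / 2 := by simp [x, rho, hij, hik]
  have hxj : x j = 1 / 2 := by simp [x, rho, hij.symm, hjk]
  have hx01 (l : Fin d) (hli : l ≠ i) (hlj : l ≠ j) : x l = 0 ∨ x l = 1 := by
    by_cases hlk : l = k
    · subst hlk
      right
      norm_num [x, rho, hli, hlj]
    · left
      simp [x, rho, hli, hlj, hlk]
  have hx : x ∈ hypersimplex (Fin d) 2 := convex_hypersimplex _ _ (hvertex hik) (hvertex hjk)
    (by norm_num) (by norm_num) (by norm_num)
  intro hint
  obtain ⟨z, hz⟩ :=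
    hint x (mem_extremePoints_hypersimplex_inter_le hij hx (hxi.trans hxj.symm) hx01) i
  have hz2 : (2 * z : ℝ) = 1 := by rw [← hz, hxi]; norm_num
  norm_cast at hz2
  omega

lemma exists_eq_neg_one_of_isSepHyperplane_top {a : Fin d → ℝ} {k : Fin d}
    (ha : ∀ i, a i = 0 ∨ a i = 1 ∨ a i = -1) (hk : a k = 0)
    (h : IsSepHyperplane (⊤ : SimpleGraph (Fin d)) a 0) : ∃ i, a i = -1 := by
  by_contra! hne
  have hnonneg : 0 ≤ a := fun i => by
    rcases ha i with hi | hi | hi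
    exacts [hi.ge, hi ▸ zero_le_one, absurd hi (hne i)]
  refine h.1 (funext fun i => ?_)
  rcases eq_or_ne i k with rfl | hik
  exacts [hk, h.eq_zero_of_nonneg hnonneg ((SimpleGraph.top_adj i k).2 hik)]

variable (d) in
lemma not_typeIIDecomposable_top : ¬TypeIIDecomposable (⊤ : SimpleGraph (Fin d)) := by
  rintro ⟨a, ha, ⟨k, hk⟩, hadj, hsep⟩
  obtain ⟨j, hj⟩ := exists_eq_neg_one_of_isSepHyperplane_top ha hk hsep
  obtain ⟨i, hi⟩ : ∃ i, a i = 1 := by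
    obtain ⟨i, hi⟩ := exists_eq_neg_one_of_isSepHyperplane_top (a := -a)
      (fun i => by simpa [neg_eq_iff_eq_neg, or_comm] using ha i) (by simpa using hk)
      (by simpa using hsep.neg)
    exact ⟨i, neg_injective hi⟩
  have hij : i ≠ j := by rintro rfl; norm_num [hj] at hi
  have hik : i ≠ k := by rintro rfl; norm_num [hk] at hi
  have hjk : j ≠ k := by rintro rfl; norm_num [hk] at hj
  have hzero (l : Fin d) (hl : l ≠ i ∧ l ≠ j) : a l = 0 := by
    rcases ha l with h | h | h
    exacts [h, absurd ⟨h, hi⟩ (hadj l i hl.1).1, absurd ⟨h, hj⟩ (hadj l j hl.2).2]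
  have hsum (y : Fin d → ℝ) : ∑ l, a l * y l = y i - y j := by
    rw [Fintype.sum_eq_add i j hij fun l hl => by rw [hzero l hl, zero_mul], hi, hj]
    ring
  obtain ⟨-, -, hint, -⟩ := hsep
  simp only [edgePolytope_top, hsum, sub_nonneg] at hint
  exact not_isIntegralSet_hypersimplex_inter_le hij hik hjk hint

end TypeII

/-- For every `d ≥ 4`, the edge polytope of the complete graph `K_d` is
type I decomposable but not type II decomposable. -/
theorem completeGraph_typeI_not_typeII (d : ℕ) (hd : 4 ≤ d) :
    TypeIDecomposable (⊤ : SimpleGraph (Fin d)) ∧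
      ¬ TypeIIDecomposable (⊤ : SimpleGraph (Fin d)) := by
  refine ⟨?_, not_typeIIDecomposable_top d⟩
  obtain ⟨S, -, hS⟩ := Finset.exists_subset_card_eq (s := (Finset.univ : Finset (Fin d)))
    (n := 2) (by simp; omega)
  refine ⟨fun i => if i ∈ S then 1 else -1, fun i => ite_eq_or_eq _ _ _,
    isSepHyperplane_top hS.ge ?_⟩
  rw [Finset.card_compl, hS, Fintype.card_fin]
  omega
end
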